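/- For every 0 ≤ t < T and x > 0, the Gaussian integral representation of the discounted call payoff equals the Black–Scholes formula: ∫_ℝ e^{−r(T−t)} max(x · exp((r − σ²/2)(T − t) + σ√(T − t) · z) − K, 0) φ(z) dz = C(t,x). -/

import Mathlib

open MeasureTheory Real

/-- Standard normal density. -/
noncomputable def stdGaussianPDF (z : ℝ) : ℝ :=
  (Real.sqrt (2 * Real.pi))⁻¹ * Real.exp (-z ^ 2 / 2)

/-- Standard normal cumulative distribution function. -/
noncomputable def stdGaussianCDF (x : ℝ) : ℝ :=
  ∫ z in Set.Iic x, stdGaussianPDF z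

/-- `d₁` in the Black–Scholes formula. -/
noncomputable def bsD1 (r σ K T t x : ℝ) : ℝ :=
  (Real.log (x / K) + (r + σ ^ 2 / 2) * (T - t)) / (σ * Real.sqrt (T - t))

/-- `d₂` in the Black–Scholes formula. -/
noncomputable def bsD2 (r σ K T t x : ℝ) : ℝ :=
  bsD1 r σ K T t x - σ * Real.sqrt (T - t)

/-- Black–Scholes call price. -/
noncomputable def bsCall (r σ K T t x : ℝ) : ℝ :=
  x * stdGaussianCDF (bsD1 r σ K T t x)
    - K * Real.exp (-(r * (T - t))) * stdGaussianCDF (bsD2 r σ K T t x)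

/-!
The payoff is positive exactly when `z` exceeds an explicit threshold, so its expectation splits
into an asset part and a strike part over a half-line. In the asset part, completing the square
turns `exp (s * z - s ^ 2 / 2)` times the Gaussian density into the density translated by `s`. With
forward `F` and total volatility `s` this is Black's formula; the Black–Scholes price is the case
`F = x * exp (r * (T - t))`, `s = σ * √(T - t)`, discounted by `exp (-(r * (T - t)))`.
-/

open ProbabilityTheory

lemma integral_max_zero_eq_setIntegral {α : Type*} [MeasurableSpace α] {μ : Measure α}
    {f : α → ℝ} {s : Set α} (hs : MeasurableSet s) (h : ∀ a, 0 ≤ f a ↔ a ∈ s) :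
    ∫ a, max (f a) 0 ∂μ = ∫ a in s, f a ∂μ := by
  rw [← integral_indicator hs]
  refine integral_congr_ae (.of_forall fun a ↦ ?_)
  by_cases ha : a ∈ s
  · simp only [Set.indicator_of_mem ha, max_eq_left ((h a).mpr ha)]
  · simp only [Set.indicator_of_notMem ha, max_eq_right (not_le.mp fun h0 ↦ ha ((h a).mp h0)).le]

lemma stdGaussianPDF_eq_gaussianPDFReal : stdGaussianPDF = gaussianPDFReal 0 1 := by
  ext z
  simp [stdGaussianPDF, gaussianPDFReal]

lemma stdGaussianPDF_pos (z : ℝ) : 0 < stdGaussianPDF z := by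
  rw [stdGaussianPDF_eq_gaussianPDFReal]
  exact gaussianPDFReal_pos 0 1 z one_ne_zero

lemma integrable_stdGaussianPDF : Integrable stdGaussianPDF := by
  rw [stdGaussianPDF_eq_gaussianPDFReal]
  exact integrable_gaussianPDFReal 0 1

lemma stdGaussianPDF_neg (z : ℝ) : stdGaussianPDF (-z) = stdGaussianPDF z := by
  simp only [stdGaussianPDF, neg_sq]

lemma exp_mul_stdGaussianPDF (s z : ℝ) :
    exp (s * z - s ^ 2 / 2) * stdGaussianPDF z = stdGaussianPDF (z - s) := by
  simp only [stdGaussianPDF]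
  rw [mul_left_comm, ← exp_add]
  congr 2
  ring

lemma setIntegral_Ici_stdGaussianPDF_sub (c s : ℝ) :
    ∫ z in Set.Ici c, stdGaussianPDF (z - s) = stdGaussianCDF (s - c) := by
  have reflect (z : ℝ) : (Set.Ici c).indicator (fun z ↦ stdGaussianPDF (z - s)) z =
      (Set.Iic (s - c)).indicator stdGaussianPDF (s - z) := by
    simp only [Set.indicator_apply, Set.mem_Ici, Set.mem_Iic, sub_le_sub_iff_left]
    rw [← neg_sub z s, stdGaussianPDF_neg]
  simp only [stdGaussianCDF, ← integral_indicator measurableSet_Ici,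
    ← integral_indicator measurableSet_Iic, reflect]
  exact integral_sub_left_eq_self _ volume s

section BlackFormula

variable {F K s : ℝ}

lemma le_mul_exp_sub_sq_iff (hF : 0 < F) (hK : 0 < K) (hs : 0 < s) (z : ℝ) :
    K ≤ F * exp (s * z - s ^ 2 / 2) ↔ s / 2 - log (F / K) / s ≤ z := by
  have threshold : s / 2 - log (F / K) / s ≤ z ↔ log (K / F) ≤ s * z - s ^ 2 / 2 := by
    rw [← inv_div F K, log_inv, ← mul_le_mul_iff_right₀ hs, mul_sub, mul_div_cancel₀ _ hs.ne']
    constructor <;> intro h <;> linarith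
  rw [threshold, log_le_iff_le_exp (div_pos hK hF), div_le_iff₀' hF]

lemma setIntegral_Ici_mul_exp_sub_mul_stdGaussianPDF (F K s c : ℝ) :
    ∫ z in Set.Ici c, (F * exp (s * z - s ^ 2 / 2) - K) * stdGaussianPDF z =
      F * stdGaussianCDF (s - c) - K * stdGaussianCDF (-c) := by
  have strike := setIntegral_Ici_stdGaussianPDF_sub c 0
  simp only [sub_zero, zero_sub] at strike
  simp only [sub_mul, mul_assoc, exp_mul_stdGaussianPDF]
  rw [integral_sub ((integrable_stdGaussianPDF.comp_sub_right s).integrableOn.const_mul F)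
      (integrable_stdGaussianPDF.integrableOn.const_mul K),
    integral_const_mul, integral_const_mul, setIntegral_Ici_stdGaussianPDF_sub, strike]

theorem integral_max_lognormal_sub_mul_stdGaussianPDF (hF : 0 < F) (hK : 0 < K) (hs : 0 < s) :
    ∫ z, max (F * exp (s * z - s ^ 2 / 2) - K) 0 * stdGaussianPDF z =
      F * stdGaussianCDF (log (F / K) / s + s / 2) -
        K * stdGaussianCDF (log (F / K) / s - s / 2) := by
  have exercise (z : ℝ) : 0 ≤ (F * exp (s * z - s ^ 2 / 2) - K) * stdGaussianPDF z ↔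
      z ∈ Set.Ici (s / 2 - log (F / K) / s) := by
    rw [mul_nonneg_iff_of_pos_right (stdGaussianPDF_pos z), sub_nonneg,
      le_mul_exp_sub_sq_iff hF hK hs, Set.mem_Ici]
  simp only [max_mul_of_nonneg _ _ (stdGaussianPDF_pos _).le, zero_mul]
  rw [integral_max_zero_eq_setIntegral measurableSet_Ici exercise,
    setIntegral_Ici_mul_exp_sub_mul_stdGaussianPDF]
  congr 3 <;> ring

end BlackFormula

section BlackScholes

variable {r σ K T t x : ℝ}

lemma bsD1_eq_log_forward (hσ : σ ≠ 0) (hK : K ≠ 0) (htT : t < T) (hx : x ≠ 0) :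
    bsD1 r σ K T t x =
      log (x * exp (r * (T - t)) / K) / (σ * √(T - t)) + σ * √(T - t) / 2 := by
  have hτ : 0 < T - t := sub_pos.mpr htT
  have hτ_sqrt : √(T - t) ≠ 0 := (sqrt_pos.mpr hτ).ne'
  have log_forward : log (x * exp (r * (T - t)) / K) = log (x / K) + r * (T - t) := by
    rw [mul_div_right_comm, log_mul (div_ne_zero hx hK) (exp_ne_zero _), log_exp]
  rw [bsD1, log_forward]
  field_simp
  rw [sq_sqrt hτ.le]
  ring

lemma bsD2_eq_log_forward (hσ : σ ≠ 0) (hK : K ≠ 0) (htT : t < T) (hx : x ≠ 0) :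
    bsD2 r σ K T t x =
      log (x * exp (r * (T - t)) / K) / (σ * √(T - t)) - σ * √(T - t) / 2 := by
  rw [bsD2, bsD1_eq_log_forward hσ hK htT hx]
  ring

lemma mul_exp_eq_forward_mul_exp (htT : t ≤ T) (z : ℝ) :
    x * exp ((r - σ ^ 2 / 2) * (T - t) + σ * √(T - t) * z) =
      x * exp (r * (T - t)) * exp (σ * √(T - t) * z - (σ * √(T - t)) ^ 2 / 2) := by
  rw [mul_assoc x, ← exp_add, mul_pow, sq_sqrt (sub_nonneg.mpr htT)]
  congr 2
  ring

end BlackScholes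

/-- Gaussian integral representation of the discounted call payoff equals the
Black–Scholes formula. -/
theorem blackScholes_integral_repr (r σ K T : ℝ) (hσ : 0 < σ) (hK : 0 < K) (hT : 0 < T)
    (t x : ℝ) (ht0 : 0 ≤ t) (htT : t < T) (hx : 0 < x) :
    ∫ z : ℝ, Real.exp (-(r * (T - t))) *
        max (x * Real.exp ((r - σ ^ 2 / 2) * (T - t) + σ * Real.sqrt (T - t) * z) - K) 0 *
        stdGaussianPDF z
      = bsCall r σ K T t x := by
  have hs : 0 < σ * √(T - t) := mul_pos hσ (sqrt_pos.mpr (sub_pos.mpr htT))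
  have hF : 0 < x * exp (r * (T - t)) := mul_pos hx (exp_pos _)
  have discount_forward : exp (-(r * (T - t))) * (x * exp (r * (T - t))) = x := by
    rw [mul_left_comm, ← exp_add, neg_add_cancel, exp_zero, mul_one]
  simp only [mul_exp_eq_forward_mul_exp htT.le, mul_assoc (exp (-(r * (T - t))))]
  rw [integral_const_mul, integral_max_lognormal_sub_mul_stdGaussianPDF hF hK hs,
    ← bsD1_eq_log_forward hσ.ne' hK.ne' htT hx.ne', ← bsD2_eq_log_forward hσ.ne' hK.ne' htT hx.ne',
    bsCall, mul_sub, ← mul_assoc, discount_forward]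
  ring
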